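/- arXiv:1605.06546 — 3 statements merged into one kernel-verified Lean document; each statement's English description precedes it below -/
import Mathlib

section
/- Let r ≥ 3 and let E ⊆ GF(2)^r \ {0} be fano-free (no 3-dimensional subspace W satisfies W \ {0} ⊆ E) with |E| > (5/8)·2^r. Then there exists a linear hyperplane H of GF(2)^r such that E ∩ H is triangle-free, i.e., there are no x, y ∈ E ∩ H with x ≠ y and x + y ∈ E ∩ H. Moreover |E ∩ H| > (1/4)·2^{r−1}. -/
/-- The character of `GF(2)^r` attached to `a`. -/
def chi {r : ℕ} (a v : Fin r → ZMod 2) : ℝ := if a ⬝ᵥ v = 0 then 1 else -1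

lemma chi_add {r : ℕ} (a v w : Fin r → ZMod 2) : chi a (v + w) = chi a v * chi a w := by
  unfold chi
  rw [dotProduct_add]
  generalize a ⬝ᵥ v = p
  generalize a ⬝ᵥ w = q
  have key : ∀ p q : ZMod 2, (p + q = 0 ↔ (p = 0 ↔ q = 0)) := by decide
  have := key p q
  by_cases hp : p = 0 <;> by_cases hq : q = 0 <;> simp [hp, hq, this] at *

lemma chi_comm {r : ℕ} (a v : Fin r → ZMod 2) : chi a v = chi v a := by
  unfold chi; rw [dotProduct_comm]

lemma chi_zero {r : ℕ} (v : Fin r → ZMod 2) : chi 0 v = 1 := by simp [chi]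

lemma sum_chi_aux {r : ℕ} (a e : Fin r → ZMod 2) (h1 : chi a e = -1) : ∑ v, chi a v = 0 := by
  have h2 : ∑ v, chi a (v + e) = ∑ v, chi a v :=
    Fintype.sum_equiv (Equiv.addRight e) _ _ (fun _ => rfl)
  have h3 : ∑ v, chi a (v + e) = - ∑ v, chi a v := by
    rw [← Finset.sum_neg_distrib]
    refine Finset.sum_congr rfl fun v _ => ?_
    rw [chi_add, h1, mul_neg_one]
  linarith

lemma sum_chi {r : ℕ} (a : Fin r → ZMod 2) (ha : a ≠ 0) : ∑ v, chi a v = 0 := by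
  obtain ⟨i, hi⟩ : ∃ i, a i ≠ 0 := by
    by_contra! h
    exact ha (funext h)
  apply sum_chi_aux a (Pi.single i 1)
  unfold chi
  rw [dotProduct_single, mul_one, if_neg hi]

lemma sum_chi' {r : ℕ} (v : Fin r → ZMod 2) :
    ∑ a, chi a v = if v = 0 then (2 : ℝ) ^ r else 0 := by
  simp only [chi_comm _ v]
  split_ifs with h
  · subst h; simp [chi_zero]
  · exact sum_chi v h

lemma add_self2 {r : ℕ} (v : Fin r → ZMod 2) : v + v = 0 := by
  funext i
  exact CharTwo.add_self_eq_zero (v i)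

lemma add_eq_zero2 {r : ℕ} (v w : Fin r → ZMod 2) : v + w = 0 ↔ w = v := by
  constructor
  · intro h
    have : v + (v + w) = v := by rw [h, add_zero]
    rwa [← add_assoc, add_self2, zero_add] at this
  · rintro rfl
    exact add_self2 _

/-- Number of elements of `A` off the hyperplane of `a`. -/
def off {r : ℕ} (A : Finset (Fin r → ZMod 2)) (a : Fin r → ZMod 2) :
    Finset (Fin r → ZMod 2) := A.filter (fun v => ¬ a ⬝ᵥ v = 0)

def onn {r : ℕ} (A : Finset (Fin r → ZMod 2)) (a : Fin r → ZMod 2) :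
    Finset (Fin r → ZMod 2) := A.filter (fun v => a ⬝ᵥ v = 0)

lemma on_off {r : ℕ} (A : Finset (Fin r → ZMod 2)) (a : Fin r → ZMod 2) :
    ((onn A a).card : ℝ) + (off A a).card = A.card := by
  exact_mod_cast Finset.card_filter_add_card_filter_not (s := A) (fun v => a ⬝ᵥ v = 0)

lemma S_eq {r : ℕ} (A : Finset (Fin r → ZMod 2)) (a : Fin r → ZMod 2) :
    ∑ v ∈ A, chi a v = A.card - 2 * (off A a).card := by
  have h := on_off A a
  unfold chi
  rw [Finset.sum_ite]
  simp only [Finset.sum_const, nsmul_eq_mul]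
  unfold onn off at *
  linarith

lemma card_univ_off {r : ℕ} (a : Fin r → ZMod 2) (ha : a ≠ 0) :
    ((off Finset.univ a).card : ℝ) = 2 ^ r / 2 := by
  have h := S_eq Finset.univ a
  rw [sum_chi a ha] at h
  simp at h
  linarith

lemma card_univ_on {r : ℕ} (a : Fin r → ZMod 2) (ha : a ≠ 0) :
    ((onn Finset.univ a).card : ℝ) = 2 ^ r / 2 := by
  have h := on_off Finset.univ a
  rw [card_univ_off a ha] at h
  simp at h
  linarith

/-- `link A x` is the set of `y` with `y, x + y ∈ A`. -/
def link {r : ℕ} (A : Finset (Fin r → ZMod 2)) (x : Fin r → ZMod 2) :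
    Finset (Fin r → ZMod 2) := A.filter (fun y => x + y ∈ A)

lemma sum_sq {r : ℕ} (A : Finset (Fin r → ZMod 2)) :
    ∑ a, (∑ v ∈ A, chi a v) ^ 2 = 2 ^ r * A.card := by
  have : ∀ a : Fin r → ZMod 2, (∑ v ∈ A, chi a v) ^ 2 = ∑ v ∈ A, ∑ w ∈ A, chi a (v + w) := by
    intro a
    rw [sq, Finset.sum_mul_sum]
    simp only [chi_add]
  simp only [this]
  rw [Finset.sum_comm]
  have : ∀ v ∈ A, ∑ a, ∑ w ∈ A, chi a (v + w) = 2 ^ r := by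
    intro v hv
    rw [Finset.sum_comm]
    simp only [sum_chi', add_eq_zero2]
    simp [hv]
  rw [Finset.sum_congr rfl this]
  simp [mul_comm]

lemma sum_cube {r : ℕ} (A : Finset (Fin r → ZMod 2)) :
    ∑ a, (∑ v ∈ A, chi a v) ^ 3 = 2 ^ r * ∑ x ∈ A, ((link A x).card : ℝ) := by
  have : ∀ a : Fin r → ZMod 2, (∑ v ∈ A, chi a v) ^ 3
      = ∑ v ∈ A, ∑ w ∈ A, ∑ z ∈ A, chi a (v + w + z) := by
    intro a
    rw [pow_succ, sq, Finset.sum_mul_sum, Finset.sum_mul]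
    refine Finset.sum_congr rfl fun v _ => ?_
    rw [Finset.sum_mul]
    refine Finset.sum_congr rfl fun w _ => ?_
    rw [Finset.mul_sum]
    simp only [chi_add]
  simp only [this]
  rw [Finset.sum_comm, Finset.mul_sum]
  refine Finset.sum_congr rfl fun v _ => ?_
  rw [Finset.sum_comm]
  have : ∀ w ∈ A, ∑ a, ∑ z ∈ A, chi a (v + w + z) = if v + w ∈ A then (2 : ℝ) ^ r else 0 := by
    intro w hw
    rw [Finset.sum_comm]
    simp only [sum_chi', add_eq_zero2]
    simp
  rw [Finset.sum_congr rfl this]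
  unfold link
  rw [← Finset.sum_filter]
  simp [mul_comm]

lemma fourier_bound {r : ℕ} (A : Finset (Fin r → ZMod 2)) (c : ℝ)
    (h : ∀ a : Fin r → ZMod 2, a ≠ 0 → ((off A a).card : ℝ) ≤ c) :
    (A.card : ℝ) ^ 3 - (2 * c - A.card) * (2 ^ r * A.card - A.card ^ 2)
      ≤ 2 ^ r * ∑ x ∈ A, ((link A x).card : ℝ) := by
  rw [← sum_cube, ← sum_sq]
  have h0 : ∑ v ∈ A, chi 0 v = A.card := by simp [chi_zero]
  rw [← Finset.add_sum_erase _ _ (Finset.mem_univ (0 : Fin r → ZMod 2)),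
    ← Finset.add_sum_erase _ (fun a => (∑ v ∈ A, chi a v) ^ 3)
      (Finset.mem_univ (0 : Fin r → ZMod 2))]
  simp only [h0]
  have : ∑ a ∈ Finset.univ.erase (0 : Fin r → ZMod 2),
      (-(2 * c - A.card) * (∑ v ∈ A, chi a v) ^ 2) ≤
      ∑ a ∈ Finset.univ.erase (0 : Fin r → ZMod 2), (∑ v ∈ A, chi a v) ^ 3 := by
    refine Finset.sum_le_sum fun a ha => ?_
    have h1 := h a (Finset.ne_of_mem_erase ha)
    have h2 := S_eq A a
    rw [pow_succ _ 2, mul_comm]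
    apply mul_le_mul_of_nonneg_left _ (sq_nonneg _)
    rw [h2]; linarith
  rw [← Finset.mul_sum] at this
  linarith

/-- If `x` translates `A` off itself inside `B`, then `2|A| ≤ |B|`. -/
lemma two_card_le {r : ℕ} (A B : Finset (Fin r → ZMod 2)) (x : Fin r → ZMod 2)
    (h1 : A ⊆ B) (h2 : ∀ y ∈ A, x + y ∈ B) (h3 : ∀ y ∈ A, x + y ∉ A) :
    2 * (A.card : ℝ) ≤ B.card := by
  have hd : Disjoint A (A.image (fun y => x + y)) := by
    rw [Finset.disjoint_left]
    intro z hz hz'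
    obtain ⟨y, hy, rfl⟩ := Finset.mem_image.mp hz'
    exact h3 y hy hz
  have hs : A ∪ A.image (fun y => x + y) ⊆ B := by
    intro z hz
    rcases Finset.mem_union.mp hz with hz | hz
    · exact h1 hz
    · obtain ⟨y, hy, rfl⟩ := Finset.mem_image.mp hz
      exact h2 y hy
  have := Finset.card_le_card hs
  rw [Finset.card_union_of_disjoint hd,
    Finset.card_image_of_injective _ (add_right_injective x)] at this
  have h : 2 * A.card ≤ B.card := by omega
  exact_mod_cast h

/-- Fano-freeness in terms of elements. -/
def FF {r : ℕ} (E : Finset (Fin r → ZMod 2)) : Prop :=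
  ∀ x y z, x ∈ E → y ∈ E → z ∈ E → x + y ∈ E → x + z ∈ E → y + z ∈ E → x + (y + z) ∈ E → False

lemma exists_hyp {r : ℕ} (E : Finset (Fin r → ZMod 2)) (h0 : (0 : Fin r → ZMod 2) ∉ E)
    (hF : FF E) (hc : (5/8 : ℝ) * 2 ^ r < E.card) :
    ∃ a : Fin r → ZMod 2, a ≠ 0 ∧ (3/8 : ℝ) * 2 ^ r < (off E a).card := by
  by_contra! hcon
  have hN : (0 : ℝ) < 2 ^ r := by positivity
  have hE : (0 : ℝ) < E.card := by linarith
  have hf := fourier_bound E _ hcon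
  -- pick x
  have hx : ∃ x ∈ E, (11/32 : ℝ) * 2 ^ r < (link E x).card := by
    by_contra! hx
    have h1 := Finset.sum_le_sum hx
    simp only [Finset.sum_const, nsmul_eq_mul] at h1
    have h2 := hf.trans (mul_le_mul_of_nonneg_left h1 hN.le)
    have h3 : (2:ℝ)^r * E.card * ((5/8 : ℝ) * 2 ^ r) < 2 ^ r * E.card * E.card :=
      mul_lt_mul_of_pos_left hc (by positivity)
    nlinarith
  obtain ⟨x, hxE, hx⟩ := hx
  set A := link E x with hA
  have memA : ∀ y, y ∈ A ↔ y ∈ E ∧ x + y ∈ E := by intro y; simp [hA, link]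
  have hxx : ∀ y, x + (x + y) = y := by intro y; rw [← add_assoc, add_self2, zero_add]
  have hsf : ∀ y ∈ A, ∀ z ∈ A, y + z ∉ A := by
    intro y hy z hz hyz
    rw [memA] at hy hz hyz
    exact hF x y z hxE hy.1 hz.1 hy.2 hz.2 hyz.1 hyz.2
  have hA2 : ∃ a : Fin r → ZMod 2, a ≠ 0 ∧ (1/4 : ℝ) * 2 ^ r < (off A a).card := by
    by_contra! hh
    have hf := fourier_bound A _ hh
    have : ∑ y ∈ A, ((link A y).card : ℝ) = 0 := by
      refine Finset.sum_eq_zero fun y hy => ?_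
      have : link A y = ∅ := by
        unfold link
        rw [Finset.filter_eq_empty_iff]
        exact fun z hz => hsf y hy z hz
      simp [this]
    rw [this] at hf
    have hApos : (0 : ℝ) < A.card := lt_trans (by positivity) hx
    have h3 : (2:ℝ)^r * A.card * ((11/32 : ℝ) * 2 ^ r) < 2 ^ r * A.card * A.card :=
      mul_lt_mul_of_pos_left hx (by positivity)
    have h4 : (0:ℝ) < 2 ^ r * 2 ^ r * A.card := by positivity
    nlinarith
  obtain ⟨a, ha, hoff⟩ := hA2
  have hAH : ∀ z ∈ A, a ⬝ᵥ z ≠ 0 := by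
    intro z hz hz0
    have := two_card_le (off A a) (off Finset.univ a) z
      (by intro y hy; simp [off] at hy ⊢; exact hy.2)
      (by intro y hy; simp [off] at hy ⊢; rw [hz0, zero_add]; exact hy.2)
      (by intro y hy hy'; simp only [off, Finset.mem_filter] at hy hy'; exact hsf z hz y hy.1 hy'.1)
    rw [card_univ_off a ha] at this
    linarith
  have hax : a ⬝ᵥ x = 0 := by
    by_contra hax
    have hne : A.Nonempty := by
      rw [← Finset.card_pos]
      have : (0 : ℝ) < A.card := lt_trans (by positivity) hx
      exact_mod_cast this
    obtain ⟨y, hy⟩ := hne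
    have hy' : x + y ∈ A := by rw [memA] at hy ⊢; rw [hxx]; exact ⟨hy.2, hy.1⟩
    have h1 := hAH y hy
    have h2 := hAH _ hy'
    rw [dotProduct_add] at h2
    revert h1 h2 hax
    generalize a ⬝ᵥ x = p
    generalize a ⬝ᵥ y = q
    revert p q
    decide
  have hon := two_card_le (onn E a) (onn Finset.univ a) x
    (by intro y hy; simp [onn] at hy ⊢; exact hy.2)
    (by intro y hy; simp [onn] at hy ⊢; rw [hax, zero_add]; exact hy.2)
    (by
      intro y hy hy'
      simp only [onn, Finset.mem_filter] at hy hy'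
      exact hAH y ((memA y).2 ⟨hy.1, hy'.1⟩) hy.2)
  rw [card_univ_on a ha] at hon
  have h1 := on_off E a
  have h2 := hcon a ha
  linarith

lemma no_triangle {r : ℕ} (E : Finset (Fin r → ZMod 2)) 
    (hF : FF E) (a : Fin r → ZMod 2) (ha : a ≠ 0)
    (hoff : (3/8 : ℝ) * 2 ^ r < (off E a).card) (x y : Fin r → ZMod 2)
    (hx : x ∈ E) (hy : y ∈ E) (hxy : x + y ∈ E) (hax : a ⬝ᵥ x = 0) (hay : a ⬝ᵥ y = 0) :
    False := by
  classical
  set B := off Finset.univ a \ off E a with hB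
  have hsub : off E a ⊆ off Finset.univ a := Finset.filter_subset_filter _ (Finset.subset_univ _)
  have hBc : B.card + (off E a).card = (off Finset.univ a).card :=
    Finset.card_sdiff_add_card_eq_card hsub
  have hcov : off Finset.univ a ⊆ ((B ∪ B.image (fun z => x + z)) ∪ B.image (fun z => y + z))
      ∪ B.image (fun z => x + y + z) := by
    intro z hz
    have hz0 : ¬ a ⬝ᵥ z = 0 := by simpa [off] using hz
    have memB : ∀ p, a ⬝ᵥ p = 0 → p + z ∉ E → p + z ∈ B := by
      intro p hp hpz
      simp [hB, off, hp, hz0, hpz]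
    have back : ∀ p : Fin r → ZMod 2, p + (p + z) = z := by
      intro p; rw [← add_assoc, add_self2, zero_add]
    simp only [Finset.mem_union, Finset.mem_image]
    by_contra! hcon
    obtain ⟨⟨⟨c1, c2⟩, c3⟩, c4⟩ := hcon
    refine hF x y z hx hy ?_ hxy ?_ ?_ ?_
    · by_contra h
      have := memB 0 (by simp) (by simpa using h)
      rw [zero_add] at this
      exact c1 this
    · by_contra h
      exact c2 _ (memB x hax h) (back x)
    · by_contra h
      exact c3 _ (memB y hay h) (back y)
    · by_contra h
      rw [← add_assoc] at h
      exact c4 _ (memB (x + y) (by simp [hax, hay]) h) (back _)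
  have h1 := Finset.card_le_card hcov
  have h2 := Finset.card_union_le ((B ∪ B.image (fun z => x + z)) ∪ B.image (fun z => y + z))
    (B.image (fun z => x + y + z))
  have h3 := Finset.card_union_le (B ∪ B.image (fun z => x + z)) (B.image (fun z => y + z))
  have h4 := Finset.card_union_le B (B.image (fun z => x + z))
  have h5 := Finset.card_image_le (s := B) (f := fun z => x + z)
  have h6 := Finset.card_image_le (s := B) (f := fun z => y + z)
  have h7 := Finset.card_image_le (s := B) (f := fun z => x + y + z)
  have h8 : (off Finset.univ a).card ≤ 4 * B.card := by omega
  have h9 := card_univ_off a ha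
  have h10 : ((off Finset.univ a).card : ℝ) ≤ 4 * B.card := by exact_mod_cast h8
  have h11 : (B.card : ℝ) + (off E a).card = (off Finset.univ a).card := by exact_mod_cast hBc
  linarith

lemma ff_of {r : ℕ} (E : Finset (Fin r → ZMod 2)) (h0 : (0 : Fin r → ZMod 2) ∉ E)
    (hfree : ¬ ∃ W : Submodule (ZMod 2) (Fin r → ZMod 2),
      Module.finrank (ZMod 2) W = 3 ∧ ∀ x ∈ W, x ≠ 0 → x ∈ E) : FF E := by
  intro x y z hx hy hz hxy hxz hyz hxyz
  apply hfree
  have h2 : ∀ c : ZMod 2, c = 0 ∨ c = 1 := by decide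
  have ne : ∀ v ∈ E, v ≠ 0 := fun v hv h => h0 (h ▸ hv)
  have hli : LinearIndependent (ZMod 2) ![x, y, z] := by
    rw [Fintype.linearIndependent_iff]
    intro g hg
    simp only [Fin.sum_univ_three, Matrix.cons_val_zero, Matrix.cons_val_one,
      Matrix.cons_val] at hg
    have n1 := ne _ hx
    have n2 := ne _ hy
    have n3 := ne _ hz
    have n4 := ne _ hxy
    have n5 := ne _ hxz
    have n6 := ne _ hyz
    have n7 := ne _ hxyz
    rw [← add_assoc] at n7
    intro i
    rcases h2 (g 0) with e0 | e0 <;> rcases h2 (g 1) with e1 | e1 <;>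
      rcases h2 (g 2) with e2 | e2 <;>
      simp only [e0, e1, e2, zero_smul, one_smul, zero_add, add_zero] at hg <;>
      first
      | exact absurd hg ‹_›
      | (fin_cases i <;> assumption)
  refine ⟨Submodule.span (ZMod 2) (Set.range ![x, y, z]), ?_, ?_⟩
  · rw [finrank_span_eq_card hli]; simp
  · intro v hv hv0
    obtain ⟨g, rfl⟩ := (Submodule.mem_span_range_iff_exists_fun _).1 hv
    simp only [Fin.sum_univ_three, Matrix.cons_val_zero, Matrix.cons_val_one,
      Matrix.cons_val] at hv0 ⊢
    rw [← add_assoc] at hxyz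
    rcases h2 (g 0) with e0 | e0 <;> rcases h2 (g 1) with e1 | e1 <;>
      rcases h2 (g 2) with e2 | e2 <;>
      simp only [e0, e1, e2, zero_smul, one_smul, zero_add, add_zero] at hv0 ⊢ <;>
      first
      | exact absurd rfl hv0
      | assumption

theorem stmt_11 (r : ℕ) (hr : 3 ≤ r)
    (E : Set (Fin r → ZMod 2)) (h0 : (0 : Fin r → ZMod 2) ∉ E)
    (hfree : ¬ ∃ W : Submodule (ZMod 2) (Fin r → ZMod 2),
      Module.finrank (ZMod 2) W = 3 ∧ ∀ x ∈ W, x ≠ 0 → x ∈ E)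
    (hcard : (5/8 : ℝ) * 2^r < (E.ncard : ℝ)) :
    ∃ H : Submodule (ZMod 2) (Fin r → ZMod 2),
      Module.finrank (ZMod 2) H = r - 1 ∧
      (¬ ∃ x y, x ∈ E ∩ (H : Set (Fin r → ZMod 2)) ∧
        y ∈ E ∩ (H : Set (Fin r → ZMod 2)) ∧ x ≠ y ∧
        x + y ∈ E ∩ (H : Set (Fin r → ZMod 2))) ∧
      (1/4 : ℝ) * 2^(r-1) < ((E ∩ (H : Set (Fin r → ZMod 2))).ncard : ℝ) := by
  classical
  obtain ⟨F, rfl⟩ : ∃ F : Finset (Fin r → ZMod 2), E = ↑F := ⟨E.toFinset, by simp⟩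
  rw [Set.ncard_coe_finset] at hcard
  have hF : FF F := ff_of F (by simpa using h0) (by simpa using hfree)
  obtain ⟨a, ha, hoff⟩ := exists_hyp F (by simpa using h0) hF hcard
  have memH : ∀ v, v ∈ LinearMap.ker (dotProductBilin (ZMod 2) (ZMod 2) a) ↔ a ⬝ᵥ v = 0 := by
    intro v; simp [LinearMap.mem_ker]
  refine ⟨LinearMap.ker (dotProductBilin (ZMod 2) (ZMod 2) a), ?_, ?_, ?_⟩
  · have hne : (dotProductBilin (ZMod 2) (ZMod 2) a : Module.Dual (ZMod 2) (Fin r → ZMod 2)) ≠ 0 := by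
      intro h
      apply ha
      apply dotProduct_eq_zero
      intro w
      exact congrArg (fun f => f w) h
    have := Module.Dual.finrank_ker_add_one_of_ne_zero hne
    rw [Module.finrank_fin_fun] at this
    omega
  · rintro ⟨x, y, ⟨hx, hx'⟩, ⟨hy, hy'⟩, -, ⟨hxy, -⟩⟩
    exact no_triangle F hF a ha hoff x y hx hy hxy ((memH x).1 hx') ((memH y).1 hy')
  · have : ((F : Set (Fin r → ZMod 2)) ∩
        (LinearMap.ker (dotProductBilin (ZMod 2) (ZMod 2) a) : Set (Fin r → ZMod 2)))
        = ↑(onn F a) := by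
      ext v
      simp only [Set.mem_inter_iff, SetLike.mem_coe, memH, onn, Finset.coe_filter, Set.mem_ofPred_eq]
    rw [this, Set.ncard_coe_finset]
    have h1 := on_off F a
    have h2 : ((off F a).card : ℝ) ≤ 2 ^ r / 2 := by
      rw [← card_univ_off a ha]
      exact_mod_cast Finset.card_le_card
        (Finset.filter_subset_filter _ (Finset.subset_univ F))
    obtain ⟨s, rfl⟩ : ∃ s, r = s + 1 := ⟨r - 1, by omega⟩
    simp only [Nat.add_sub_cancel]
    rw [pow_succ] at *
    linarith
end

section
/- Let n ≥ 2, r ≥ n+2, and let E ⊆ GF(2)^r \ {0} be PG(n−1,2)-free with |E| > (1 − 2/2^n − 3/2^{n+2})·2^r. Then there is an (r−n)-dimensional subspace F of GF(2)^r with E ∩ F = ∅. -/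
open Finset in
theorem clebsch_key {V : Type*} [AddCommGroup V] (h2 : ∀ v : V, v + v = 0)
    (E : Set V) (φ : V → ℕ) (hc : ∀ u v e, e ∈ E → v = u + e → φ u + φ v ≤ 1)
    (a b c d : V) (ha : a ∈ E) (hb : b ∈ E) (hcc : c ∈ E) (hd : d ∈ E)
    (he : a + b + c + d ∈ E) (x : V) (hx : φ x ≠ 0) :
    φ x + φ (x + a) + φ (x + b) + φ (x + (a + b)) + φ (x + c) + φ (x + (a + c)) + φ (x + (b + c))
     + φ (x + (a + b + c)) + φ (x + d) + φ (x + (a + d)) + φ (x + (b + d)) + φ (x + (a + b + d))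
     + φ (x + (c + d)) + φ (x + (a + c + d)) + φ (x + (b + c + d)) + φ (x + (a + b + c + d)) ≤ 5 := by
  have a2 := h2 a
  have b2 := h2 b
  have c2 := h2 c
  have d2 := h2 d
  have n1 := hc x (x + a) a ha rfl
  have n2 := hc x (x + b) b hb rfl
  have n3 := hc x (x + c) c hcc rfl
  have n4 := hc x (x + d) d hd rfl
  have n5 := hc x (x + (a + b + c + d)) _ he rfl
  -- first five-cycle
  have p1 := hc (x + (a + b)) (x + (c + d)) _ he (by grind)
  have p2 := hc (x + (c + d)) (x + (b + c + d)) b hb (by grind)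
  have p3 := hc (x + (b + c + d)) (x + (b + c)) d hd (by grind)
  have p4 := hc (x + (b + c)) (x + (a + b + c)) a ha (by grind)
  have p5 := hc (x + (a + b + c)) (x + (a + b)) c hcc (by grind)
  -- second five-cycle
  have q1 := hc (x + (a + c)) (x + (a + c + d)) d hd (by grind)
  have q2 := hc (x + (a + c + d)) (x + (a + d)) c hcc (by grind)
  have q3 := hc (x + (a + d)) (x + (a + b + d)) b hb (by grind)
  have q4 := hc (x + (a + b + d)) (x + (b + d)) a ha (by grind)
  have q5 := hc (x + (b + d)) (x + (a + c)) _ he (by grind)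
  have P : φ (x + (a + b)) + φ (x + (c + d)) + φ (x + (b + c + d)) + φ (x + (b + c))
    + φ (x + (a + b + c)) ≤ 2 := by omega
  have Q : φ (x + (a + c)) + φ (x + (a + c + d)) + φ (x + (a + d)) + φ (x + (a + b + d))
    + φ (x + (b + d)) ≤ 2 := by omega
  omega

theorem clebsch_card {V : Type*} [AddCommGroup V] [Fintype V] (h2 : ∀ v : V, v + v = 0)
    (E : Set V) (hE : ∀ x ∈ E, ∀ y ∈ E, x + y ∉ E)
    (a b c d : V) (ha : a ∈ E) (hb : b ∈ E) (hcc : c ∈ E) (hd : d ∈ E)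
    (he : a + b + c + d ∈ E) : 16 * E.ncard ≤ 5 * Nat.card V := by
  classical
  obtain ⟨φ, hφ⟩ : ∃ φ : V → ℕ, ∀ v, φ v = if v ∈ E then 1 else 0 := ⟨_, fun _ => rfl⟩
  have hc : ∀ u v e, e ∈ E → v = u + e → φ u + φ v ≤ 1 := by
    intro u v e he hv
    by_cases h1 : u ∈ E
    · have : v ∉ E := hv ▸ hE u h1 e he
      simp [hφ, h1, this]
    · simp only [hφ, if_neg h1]; split_ifs <;> simp
  have key := clebsch_key h2 E φ hc a b c d ha hb hcc hd he
  obtain ⟨T, hT⟩ : ∃ T : V → (V → ℕ) → (V → ℕ), ∀ e g x, T e g x = g x + g (x + e) :=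
    ⟨fun e g x => g x + g (x + e), fun _ _ _ => rfl⟩
  have Tinv : ∀ e g x, T e g (x + e) = T e g x := by
    intro e g x
    simp only [hT, add_assoc, h2 e, add_zero]
    omega
  have Tsh : ∀ e g f, (∀ x, g (x + f) = g x) → ∀ x, T e g (x + f) = T e g x := by
    intro e g f hg x
    simp only [hT, hg]
    rw [add_right_comm, hg]
  have Tsum : ∀ e g, ∑ x, T e g x = 2 * ∑ x, g x := by
    intro e g
    simp only [hT, Finset.sum_add_distrib]
    have := Equiv.sum_comp (Equiv.addRight e) g
    simp only [Equiv.coe_addRight] at this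
    rw [this]; ring
  obtain ⟨h, hh⟩ : ∃ h, h = T a (T b (T c (T d φ))) := ⟨_, rfl⟩
  have hsum : ∑ x, h x = 16 * ∑ x, φ x := by
    simp only [hh, Tsum]; ring
  have hd' : ∀ x, h (x + d) = h x := hh ▸ Tsh _ _ _ (Tsh _ _ _ (Tsh _ _ _ (Tinv _ _)))
  have hc' : ∀ x, h (x + c) = h x := hh ▸ Tsh _ _ _ (Tsh _ _ _ (Tinv _ _))
  have hb' : ∀ x, h (x + b) = h x := hh ▸ Tsh _ _ _ (Tinv _ _)
  have ha' : ∀ x, h (x + a) = h x := hh ▸ Tinv _ _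
  have key' : ∀ x, φ x ≠ 0 → h x ≤ 5 := by
    intro x hx
    have := key x hx
    simp only [hh, hT, ← add_assoc] at this ⊢
    linarith
  have hle : ∀ x, h x ≤ 5 := by
    intro x
    by_contra hlt
    have hne : h x ≠ 0 := by omega
    have g : ∀ y, h y = h x → φ y = 0 := by
      intro y hy
      by_contra h0
      have := key' y h0
      omega
    apply hne
    rw [hh]
    simp only [hT]
    repeat rw [g _ (by simp only [ha', hb', hc', hd'])]
  have hEs : ∑ x, φ x = E.ncard := by
    simp only [hφ, Finset.sum_boole, Set.ncard_eq_toFinset_card']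
    simp
  have := Finset.sum_le_sum (fun x (_ : x ∈ Finset.univ) => hle x)
  rw [hsum, hEs] at this
  simp at this
  rw [Nat.card_eq_fintype_card]; omega

theorem sumfree_dual {V : Type*} [AddCommGroup V] [Module (ZMod 2) V] [Finite V]
    (E : Set V) (hE : ∀ x ∈ E, ∀ y ∈ E, x + y ∉ E) (hcard : 5 * Nat.card V < 16 * E.ncard) :
    ∃ f : V →ₗ[ZMod 2] ZMod 2, f ≠ 0 ∧ ∀ x ∈ E, f x ≠ 0 := by
  classical
  have := Fintype.ofFinite V
  have h2 : ∀ v : V, v + v = 0 := fun v => ZModModule.add_self v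
  obtain ⟨M, hEM, hM⟩ := Set.Finite.exists_le_maximal
    (Set.toFinite {S : Set V | ∀ x ∈ S, ∀ y ∈ S, x + y ∉ S}) (show E ∈ _ from hE)
  have hMs : ∀ x ∈ M, ∀ y ∈ M, x + y ∉ M := hM.prop
  have hMc : 5 * Nat.card V < 16 * M.ncard := by
    have := Set.ncard_le_ncard (s := E) (t := M) hEM (Set.toFinite _)
    omega
  have hMne : M.Nonempty := by
    rw [Set.nonempty_iff_ne_empty]; rintro rfl
    simp at hMc
  have h0 : (0 : V) ∉ M := by
    intro h; have := hMs 0 h 0 h; simp at this; exact this h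
  -- completeness
  have hcomp : ∀ x, x ∉ M → ∃ a ∈ M, ∃ b ∈ M, x = a + b := by
    intro x hx
    by_cases hx0 : x = 0
    · obtain ⟨m, hm⟩ := hMne
      exact ⟨m, hm, m, hm, by rw [hx0, h2]⟩
    by_contra hno
    push Not at hno
    have : (insert x M) ⊆ M := hM.le_of_ge (y := insert x M) (by
      intro a ha b hb hab
      rcases ha with rfl | ha <;> rcases hb with rfl | hb <;> rcases hab with hab | hab
      · exact hx0 (by rw [← hab, h2])
      · rw [h2] at hab; exact h0 hab
      · exact h0 (by have : b = 0 := by simpa using hab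
                     rwa [← this])
      · exact hno _ hab b hb (by rw [add_assoc, h2, add_zero])
      · exact h0 (by have : a = 0 := by simpa using hab
                     rwa [← this])
      · exact hno _ hab a ha (by rw [add_comm a, add_assoc, h2, add_zero])
      · exact hno a ha b hb hab.symm
      · exact hMs a ha b hb hab) (Set.subset_insert _ _)
    exact hx (this (Set.mem_insert _ _))
  have hDD : ∀ x, x ∉ M → ∀ y, y ∉ M → x + y ∉ M := by
    intro x hx y hy hxy
    obtain ⟨a, ha, b, hb, rfl⟩ := hcomp x hx
    obtain ⟨c, hc, d, hd, rfl⟩ := hcomp y hy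
    have := clebsch_card h2 M hMs a b c d ha hb hc hd (by rwa [← add_assoc] at hxy)
    omega
  have hDE : ∀ x, x ∉ M → ∀ y ∈ M, x + y ∈ M := by
    intro x hx y hy
    by_contra h
    apply hDD x hx _ h
    rwa [← add_assoc, h2, zero_add]
  let f : V →+ ZMod 2 := 
    { toFun := fun x => if x ∈ M then 1 else 0
      map_zero' := by simp [h0]
      map_add' := by
        intro x y
        by_cases hx : x ∈ M <;> by_cases hy : y ∈ M
        · simp [hx, hy, hMs x hx y hy]; decide
        · have := hDE y hy x hx
          rw [add_comm] at this
          simp [hx, hy, this]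
        · simp [hx, hy, hDE x hx y hy]
        · simp [hx, hy, hDD x hx y hy] }
  have hf : ∀ x ∈ M, f x ≠ 0 := by
    intro x hx
    show (if x ∈ M then (1 : ZMod 2) else 0) ≠ 0
    simp [hx]
  refine ⟨f.toZModLinearMap 2, ?_, fun x hx => hf x (hEM hx)⟩
  rintro h
  obtain ⟨m, hm⟩ := hMne
  exact hf m hm (by simpa using congrArg (fun g => g m) h)

theorem ext_clean {V : Type*} [AddCommGroup V] [Module (ZMod 2) V] [Finite V]
    (B : Set V) (h0 : (0 : V) ∈ B) (W : Submodule (ZMod 2) V) (hW : ∀ x ∈ W, x ≠ 0 → x ∉ B)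
    (x : V) (hx : ∀ w ∈ W, x + w ∉ B) :
    ∃ U : Submodule (ZMod 2) V, Module.finrank (ZMod 2) U = Module.finrank (ZMod 2) W + 1 ∧
      (∀ u ∈ U, u ≠ 0 → u ∉ B) ∧ ∀ u ∈ U, u ∈ W ∨ ∃ w ∈ W, u = x + w := by
  have hxW : x ∉ W := by
    intro h; apply hx x h; rwa [ZModModule.add_self]
  have hU : ∀ u ∈ W ⊔ Submodule.span (ZMod 2) {x}, u ∈ W ∨ ∃ w ∈ W, u = x + w := by
    intro u hu
    obtain ⟨w, hw, z, hz, rfl⟩ := Submodule.mem_sup.1 hu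
    obtain ⟨t, rfl⟩ := Submodule.mem_span_singleton.1 hz
    have ht : t = 0 ∨ t = 1 := (by decide : ∀ t : ZMod 2, t = 0 ∨ t = 1) t
    rcases ht with rfl | rfl
    · left; simpa using hw
    · right; exact ⟨w, hw, by rw [one_smul, add_comm]⟩
  refine ⟨W ⊔ Submodule.span (ZMod 2) {x}, ?_, ?_, hU⟩
  · have hd : Disjoint W (Submodule.span (ZMod 2) {x}) := by
      rw [Submodule.disjoint_span_singleton]
      intro h; exact absurd h hxW
    have := Submodule.finrank_sup_add_finrank_inf_eq W (Submodule.span (ZMod 2) {x})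
    rw [hd.eq_bot, finrank_bot, finrank_span_singleton] at this
    · omega
    · rintro rfl; exact hxW W.zero_mem
  · intro u hu hu0
    rcases hU u hu with h | ⟨w, hw, rfl⟩
    · exact hW u h hu0
    · exact hx w hw

theorem card_pow {V : Type*} [AddCommGroup V] [Module (ZMod 2) V] [Finite V] :
    Nat.card V = 2 ^ Module.finrank (ZMod 2) V := by
  have := Module.natCard_eq_pow_finrank (K := ZMod 2) (V := V)
  simpa using this

theorem notmem_image {V : Type*} [AddCommGroup V] [Module (ZMod 2) V] (B : Set V)
    (W : Submodule (ZMod 2) V) (x : V) (hx : W.mkQ x ∉ W.mkQ '' B) : ∀ w ∈ W, x + w ∉ B := by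
  intro w hw h
  exact hx ⟨_, h, by simp [hw]⟩

theorem exists_clean {V : Type*} [AddCommGroup V] [Module (ZMod 2) V] [Finite V]
    (B : Set V) (h0 : (0 : V) ∈ B) (d k : ℕ) (hr : Module.finrank (ZMod 2) V = d + 1 + k)
    (hB : 8 * B.ncard < 11 * 2 ^ d) (j : ℕ) (hj : j ≤ k) :
    ∃ W : Submodule (ZMod 2) V, Module.finrank (ZMod 2) W = j ∧ ∀ x ∈ W, x ≠ 0 → x ∉ B := by
  induction j with
  | zero => exact ⟨⊥, by simp, by simp⟩
  | succ j ih =>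
    obtain ⟨W, hWj, hW⟩ := ih (by omega)
    have : Finite (V ⧸ W) := Finite.of_surjective _ W.mkQ_surjective
    have hq : Module.finrank (ZMod 2) (V ⧸ W) = d + 1 + k - j := by
      have := W.finrank_quotient_add_finrank; omega
    have hex : ∃ y, y ∉ W.mkQ '' B := by
      by_contra hno
      push Not at hno
      have h1 : W.mkQ '' B = Set.univ := Set.eq_univ_of_forall hno
      have h2 := Set.ncard_image_le (f := W.mkQ) (Set.toFinite B)
      rw [h1, Set.ncard_univ, card_pow, hq] at h2
      have : 2 ^ (d + 1) ≤ 2 ^ (d + 1 + k - j) := Nat.pow_le_pow_right (by norm_num) (by omega)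
      rw [pow_succ] at this
      omega
    obtain ⟨y, hy⟩ := hex
    obtain ⟨x, rfl⟩ := W.mkQ_surjective y
    obtain ⟨U, hU1, hU2, -⟩ := ext_clean B h0 W hW x (notmem_image B W x hy)
    exact ⟨U, by omega, hU2⟩

theorem main_ind (d k : ℕ) : ∀ {V : Type} [AddCommGroup V] [Module (ZMod 2) V] [Finite V]
    (B : Set V) (_ : (0 : V) ∈ B) (_ : Module.finrank (ZMod 2) V = d + 1 + k)
    (_ : 8 * B.ncard < 11 * 2 ^ d)
    (_ : ∀ W : Submodule (ZMod 2) V, Module.finrank (ZMod 2) W = k + 2 → ∃ x ∈ W, x ≠ 0 ∧ x ∈ B),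
    ∃ F : Submodule (ZMod 2) V, Module.finrank (ZMod 2) F = d ∧ ∀ x ∈ F, x ∈ B := by
  induction k with
  | zero => 
    intro V _ _ _ B h0 hr hB hbl
    have hs : ∀ x ∈ Bᶜ, ∀ y ∈ Bᶜ, x + y ∉ Bᶜ := by
      intro x hx y hy hxy
      obtain ⟨U, hU1, hU2, hU3⟩ := ext_clean B h0 ⊥ (by simp) x (by simpa using hx)
      obtain ⟨U', hU1', hU2', -⟩ := ext_clean B h0 U hU2 y (by
        intro u hu
        rcases hU3 u hu with h | ⟨w, hw, rfl⟩
        · have : u = 0 := by simpa using h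
          simpa [this] using hy
        · have : w = 0 := by simpa using hw
          subst this
          rw [add_zero, add_comm]; exact hxy)
      obtain ⟨z, hz, hz0, hzB⟩ := hbl U' (by rw [hU1', hU1]; simp)
      exact hU2' z hz hz0 hzB
    have hcc := Set.ncard_add_ncard_compl B
    rw [card_pow, hr] at hcc
    obtain ⟨f, hf, hfE⟩ := sumfree_dual Bᶜ hs (by
      rw [card_pow, hr]
      have : 2 ^ (d + 1 + 0) = 2 * 2 ^ d := by ring
      omega)
    refine ⟨LinearMap.ker f, ?_, ?_⟩
    · have := Module.Dual.finrank_ker_add_one_of_ne_zero hf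
      omega
    · intro x hx
      by_contra h
      exact hfE x h hx
  | succ k ih =>
    intro V _ _ _ B h0 hr hB hbl
    obtain ⟨W, hWk, hW⟩ := exists_clean B h0 d (k + 1) hr hB (k + 1) le_rfl
    have : Finite (V ⧸ W) := Finite.of_surjective _ W.mkQ_surjective
    have hq : Module.finrank (ZMod 2) (V ⧸ W) = d + 1 := by
      have := W.finrank_quotient_add_finrank; omega
    have hs : ∀ x ∈ (W.mkQ '' B)ᶜ, ∀ y ∈ (W.mkQ '' B)ᶜ, x + y ∉ (W.mkQ '' B)ᶜ := by
      intro x hx y hy hxy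
      obtain ⟨x, rfl⟩ := W.mkQ_surjective x
      obtain ⟨y, rfl⟩ := W.mkQ_surjective y
      rw [← map_add] at hxy
      obtain ⟨U, hU1, hU2, hU3⟩ := ext_clean B h0 W hW x (notmem_image B W x hx)
      obtain ⟨U', hU1', hU2', -⟩ := ext_clean B h0 U hU2 y (by
        intro u hu
        rcases hU3 u hu with h | ⟨w, hw, rfl⟩
        · exact notmem_image B W y hy u h
        · rw [← add_assoc, add_comm y x]
          exact notmem_image B W _ hxy w hw)
      obtain ⟨z, hz, hz0, hzB⟩ := hbl U' (by omega)
      exact hU2' z hz hz0 hzB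
    have hcc := Set.ncard_add_ncard_compl (W.mkQ '' B)
    have hle := Set.ncard_image_le (f := W.mkQ) (Set.toFinite B)
    rw [card_pow, hq] at hcc
    obtain ⟨f, hf, hfE⟩ := sumfree_dual _ hs (by
      rw [card_pow, hq]
      have : 2 ^ (d + 1) = 2 * 2 ^ d := by ring
      omega)
    let g : V →ₗ[ZMod 2] ZMod 2 := f ∘ₗ W.mkQ
    have hg : g ≠ 0 := by
      intro h
      apply hf
      ext x
      simpa [g] using congrArg (fun t => t x) h
    let H : Submodule (ZMod 2) V := LinearMap.ker g
    have hH : Module.finrank (ZMod 2) H + 1 = d + 1 + (k + 1) := by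
      rw [← hr]; exact Module.Dual.finrank_ker_add_one_of_ne_zero hg
    -- B ∩ H is large
    have hBH : 2 ^ d ≤ (B ∩ (H : Set V)).ncard := by
      have h1 : ((LinearMap.ker f : Submodule (ZMod 2) (V ⧸ W)) : Set (V ⧸ W)) ⊆
          W.mkQ '' (B ∩ (H : Set V)) := by
        intro y hy
        by_cases h : y ∈ W.mkQ '' B
        · obtain ⟨b, hb, rfl⟩ := h
          exact ⟨b, ⟨hb, hy⟩, rfl⟩
        · exact absurd hy (hfE y h)
      have h2 := Set.ncard_le_ncard h1 (Set.toFinite _)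
      have h3 := Set.ncard_image_le (f := W.mkQ) (Set.toFinite (B ∩ (H : Set V)))
      have h4 : ((LinearMap.ker f : Submodule (ZMod 2) (V ⧸ W)) : Set (V ⧸ W)).ncard = 2 ^ d := by
        have := Module.Dual.finrank_ker_add_one_of_ne_zero hf
        rw [← Nat.card_coe_set_eq]
        have h5 := card_pow (V := LinearMap.ker f)
        rw [show Module.finrank (ZMod 2) (LinearMap.ker f) = d by omega] at h5
        exact h5
      omega
    have hsplit : (B ∩ (H : Set V)).ncard + (B \ (H : Set V)).ncard = B.ncard :=
      Set.ncard_inter_add_ncard_sdiff_eq_ncard B H (Set.toFinite _)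
    -- B ∩ H blocks
    have hblH : ∀ U : Submodule (ZMod 2) V, U ≤ H → Module.finrank (ZMod 2) U = k + 2 →
        ∃ x ∈ U, x ≠ 0 ∧ x ∈ B := by
      intro U hUH hU
      by_contra hno
      push Not at hno
      have : Finite (V ⧸ U) := Finite.of_surjective _ U.mkQ_surjective
      have hqU : Module.finrank (ZMod 2) (V ⧸ U) = d := by
        have := U.finrank_quotient_add_finrank; omega
      have hall : ∀ x, U.mkQ x ∈ U.mkQ '' B := by
        intro x
        by_contra hx
        obtain ⟨U', h1, h2, -⟩ := ext_clean B h0 U hno x (notmem_image B U x hx)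
        obtain ⟨z, hz, hz0, hzB⟩ := hbl U' (by omega)
        exact h2 z hz hz0 hzB
      let g' : (V ⧸ U) →ₗ[ZMod 2] ZMod 2 := U.liftQ g hUH
      have hg' : g' ≠ 0 := by
        intro h
        apply hg
        ext x
        simpa [g'] using congrArg (fun t => t (U.mkQ x)) h
      have hfk := Module.Dual.finrank_ker_add_one_of_ne_zero hg'
      have hck : ((LinearMap.ker g' : Submodule (ZMod 2) (V ⧸ U)) : Set (V ⧸ U)).ncard * 2
          = 2 ^ d := by
        rw [← Nat.card_coe_set_eq]
        have h5 := card_pow (V := LinearMap.ker g')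
        rw [← hqU, ← hfk, pow_succ, ← h5]
        rfl
      have hcompl := Set.ncard_add_ncard_compl
        ((LinearMap.ker g' : Submodule (ZMod 2) (V ⧸ U)) : Set (V ⧸ U))
      rw [card_pow, hqU] at hcompl
      have hsub : ((LinearMap.ker g' : Submodule (ZMod 2) (V ⧸ U)) : Set (V ⧸ U))ᶜ ⊆
          U.mkQ '' (B \ (H : Set V)) := by
        intro y hy
        obtain ⟨x, rfl⟩ := U.mkQ_surjective y
        obtain ⟨b, hb, hbx⟩ := hall x
        refine ⟨b, ⟨hb, fun hbH => hy ?_⟩, hbx⟩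
        rw [← hbx]
        exact hbH
      have h2 := Set.ncard_le_ncard hsub (Set.toFinite _)
      have h3 := Set.ncard_image_le (f := U.mkQ) (Set.toFinite (B \ (H : Set V)))
      omega
    have hpre : (H.subtype ⁻¹' B).ncard = (B ∩ (H : Set V)).ncard := by
      rw [← Set.ncard_image_of_injective _ H.injective_subtype]
      congr 1
      ext x
      simp [and_comm]
    obtain ⟨F, hF, hFB⟩ := ih (V := H) (H.subtype ⁻¹' B) (by simpa using h0) (by omega)
      (by rw [hpre]; omega) (by
        intro U hU
        obtain ⟨x, hx, hx0, hxB⟩ := hblH (U.map H.subtype) (Submodule.map_subtype_le _ _)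
          (by rw [Submodule.finrank_map_subtype_eq, hU])
        obtain ⟨u, hu, rfl⟩ := hx
        exact ⟨u, hu, fun h => hx0 (by simp [h]), hxB⟩)
    refine ⟨F.map H.subtype, by rw [Submodule.finrank_map_subtype_eq, hF], ?_⟩
    rintro x ⟨u, hu, rfl⟩
    exact hFB u hu

theorem stmt_13 (r n : ℕ) (hn : 2 ≤ n) (hr : n + 2 ≤ r)
    (E : Set (Fin r → ZMod 2)) (h0 : (0 : Fin r → ZMod 2) ∉ E)
    (hfree : ¬ ∃ W : Submodule (ZMod 2) (Fin r → ZMod 2),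
      Module.finrank (ZMod 2) W = n ∧ ∀ x ∈ W, x ≠ 0 → x ∈ E)
    (hcard : (1 - 2 / 2^n - 3 / 2^(n+2) : ℝ) * 2^r < (E.ncard : ℝ)) :
    ∃ F : Submodule (ZMod 2) (Fin r → ZMod 2),
      Module.finrank (ZMod 2) F = r - n ∧ E ∩ (F : Set (Fin r → ZMod 2)) = ∅ := by
  obtain ⟨k, rfl⟩ := Nat.exists_eq_add_of_le' hn
  obtain ⟨e, rfl⟩ := Nat.exists_eq_add_of_le' hr
  have hcc := Set.ncard_add_ncard_compl E
  have hfr : Module.finrank (ZMod 2) (Fin (e + (k + 2 + 2)) → ZMod 2) = e + 3 + 1 + k := by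
    simp; omega
  rw [card_pow, hfr] at hcc
  have hcR : (E.ncard : ℝ) + (Eᶜ.ncard : ℝ) = 2 ^ (e + 3 + 1 + k) := by exact_mod_cast hcc
  have hB : 8 * Eᶜ.ncard < 11 * 2 ^ (e + 3) := by
    have h1 : (1 - 2 / 2^(k+2) - 3 / 2^(k+2+2) : ℝ) * 2^(e + (k + 2 + 2))
        = 2 ^ (e + 3 + 1 + k) - 11 * 2 ^ e := by
      field_simp
      ring
    rw [h1] at hcard
    have : (8 * Eᶜ.ncard : ℝ) < 11 * 2 ^ (e + 3) := by
      have : (2 : ℝ) ^ (e + 3) = 8 * 2 ^ e := by ring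
      linarith
    exact_mod_cast this
  obtain ⟨F, hF, hFB⟩ := main_ind (e + 3) k (V := Fin (e + (k + 2 + 2)) → ZMod 2) Eᶜ h0 hfr hB (by
    intro W hW
    by_contra hno
    push Not at hno
    exact hfree ⟨W, hW, fun x hx hx0 => by simpa using hno x hx hx0⟩)
  obtain ⟨ι, hι⟩ := (finrank_le_iff_exists_linearMap (R := ZMod 2)
    (M := Fin (e + 2) → ZMod 2) (M' := F)).1 (by rw [hF]; simp)
  obtain ⟨F', hF'F, hF'⟩ : ∃ F' ≤ F, Module.finrank (ZMod 2) F' = e + 2 :=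
    ⟨(LinearMap.range ι).map F.subtype, Submodule.map_subtype_le _ _, by
      rw [Submodule.finrank_map_subtype_eq, LinearMap.finrank_range_of_inj hι]; simp⟩
  refine ⟨F', by rw [hF']; omega, ?_⟩
  ext x
  simp only [Set.mem_inter_iff, SetLike.mem_coe, Set.mem_empty_iff_false, iff_false, not_and]
  intro hx hxF
  exact hFB x (hF'F hxF) hx
end

section
/- Let r ≥ n ≥ 2 and let E ⊆ GF(2)^r \ {0} be PG(n−1,2)-free with |E| > (1 − 3/2^n)·2^r. Then there exists a subspace K of GF(2)^r of dimension r − n + 2 such that E ∩ K is triangle-free (no x, y ∈ E ∩ K with x ≠ y and x + y ∈ E ∩ K), and moreover |E ∩ K| > (1/4)·2^{r−n+2}. -/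
namespace PGFree
open Finset Module

/-- The nontrivial sign character of the two-element field. -/
noncomputable def sg (z : ZMod 2) : ℝ := if z = 0 then 1 else -1

lemma sg_add (a b : ZMod 2) : sg (a + b) = sg a * sg b := by
  have h11 : (1 : ZMod 2) + 1 = 0 := by decide
  have h : ∀ z : ZMod 2, z = 0 ∨ z = 1 := by decide
  rcases h a with rfl | rfl <;> rcases h b with rfl | rfl <;> simp [sg, h11]

set_option linter.unusedSectionVars false
section fourier
open scoped Classical
variable {V : Type} [AddCommGroup V] [Module (ZMod 2) V] [Fintype V]

noncomputable instance dualFintype : Fintype (Dual (ZMod 2) V) :=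
  Fintype.ofInjective (fun f : Dual (ZMod 2) V => (f : V → ZMod 2)) DFunLike.coe_injective

noncomputable def ft (B : Finset V) (f : Dual (ZMod 2) V) : ℝ := ∑ x ∈ B, sg (f x)

lemma add_self_zero (x : V) : x + x = 0 := ZModModule.add_self x

lemma card_dual : Fintype.card (Dual (ZMod 2) V) = Fintype.card V := by
  rw [Module.card_eq_pow_finrank (K := ZMod 2) (V := V),
    Module.card_eq_pow_finrank (K := ZMod 2) (V := Dual (ZMod 2) V), Subspace.dual_finrank_eq]

lemma sum_dual (x : V) :
    ∑ f : Dual (ZMod 2) V, sg (f x) = if x = 0 then (Fintype.card V : ℝ) else 0 := by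
  split_ifs with h
  · subst h
    simp [sg, card_dual]
  · obtain ⟨g, hg⟩ : ∃ g : Dual (ZMod 2) V, g x ≠ 0 := by
      by_contra! hc
      exact h ((Module.forall_dual_apply_eq_zero_iff (ZMod 2) x).1 hc)
    have h1 : ∑ f : Dual (ZMod 2) V, sg (f x) = ∑ f : Dual (ZMod 2) V, sg ((f + g) x) :=
      (Equiv.sum_comp (Equiv.addRight g) (fun f : Dual (ZMod 2) V => sg (f x))).symm
    have h2 : ∑ f : Dual (ZMod 2) V, sg ((f + g) x) = - ∑ f : Dual (ZMod 2) V, sg (f x) := by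
      rw [← Finset.sum_neg_distrib]
      refine Finset.sum_congr rfl fun f _ => ?_
      rw [LinearMap.add_apply, sg_add]
      simp [sg, hg]
    linarith

lemma ft_zero (B : Finset V) : ft B 0 = B.card := by
  simp [ft, sg]

lemma add_eq_zero_iff' (x y : V) : x + y = 0 ↔ y = x := by
  constructor
  · intro h
    have := add_self_zero x
    exact add_left_cancel (h.trans this.symm)
  · rintro rfl
    exact add_self_zero _

lemma ft_sq (B : Finset V) : ∑ f, ft B f ^ 2 = (Fintype.card V : ℝ) * B.card := by
  have h : ∀ f, ft B f ^ 2 = ∑ x ∈ B, ∑ y ∈ B, sg (f (x + y)) := by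
    intro f
    rw [sq, ft, Finset.sum_mul_sum]
    simp [map_add, sg_add]
  simp_rw [h]
  rw [Finset.sum_comm]
  have : ∀ x ∈ B, ∑ f : Dual (ZMod 2) V, ∑ y ∈ B, sg (f (x + y)) = Fintype.card V := by
    intro x hx
    rw [Finset.sum_comm]
    simp_rw [sum_dual, add_eq_zero_iff']
    simp [hx]
  rw [Finset.sum_congr rfl this]
  simp [mul_comm]

noncomputable def rr (B : Finset V) (u : V) : ℕ := (B.filter fun x => x + u ∈ B).card

noncomputable def TT (B : Finset V) : ℝ := ∑ u ∈ B, (rr B u : ℝ)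

lemma ft_cube (B : Finset V) : ∑ f, ft B f ^ 3 = (Fintype.card V : ℝ) * TT B := by
  have h : ∀ f, ft B f ^ 3 = ∑ x ∈ B, ∑ y ∈ B, ∑ z ∈ B, sg (f (y + x + z)) := by
    intro f
    have : ft B f ^ 3 = ft B f * (ft B f * ft B f) := by ring
    rw [this, ft, Finset.sum_mul_sum, Finset.sum_mul_sum]
    refine Finset.sum_congr rfl fun x _ => ?_
    rw [Finset.sum_congr rfl (fun y _ => Finset.mul_sum _ _ _)]
    refine Finset.sum_congr rfl fun y _ => Finset.sum_congr rfl fun z _ => ?_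
    simp only [map_add, sg_add]
    ring
  simp_rw [h]
  rw [Finset.sum_comm, TT, Finset.mul_sum]
  refine Finset.sum_congr rfl fun x _ => ?_
  rw [Finset.sum_comm, rr, Finset.card_filter]
  push_cast
  rw [Finset.mul_sum]
  refine Finset.sum_congr rfl fun y _ => ?_
  rw [Finset.sum_comm]
  simp_rw [sum_dual, add_eq_zero_iff']
  simp

lemma sum_nonzero (g : Dual (ZMod 2) V → ℝ) :
    ∑ f, g f = g 0 + ∑ f ∈ univ.erase 0, g f := by
  rw [Finset.add_sum_erase _ _ (Finset.mem_univ _)]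

lemma ft_upper (B : Finset V) (M : ℝ) (hM : ∀ f, f ≠ 0 → ft B f ≤ M) :
    (Fintype.card V : ℝ) * TT B ≤
      (B.card : ℝ) ^ 3 + M * ((Fintype.card V : ℝ) * B.card - (B.card : ℝ) ^ 2) := by
  have h2 := ft_sq B
  have h3 := ft_cube B
  rw [sum_nonzero, ft_zero] at h2 h3
  have : ∑ f ∈ univ.erase 0, ft B f ^ 3 ≤ M * ∑ f ∈ univ.erase 0, ft B f ^ 2 := by
    rw [Finset.mul_sum]
    refine Finset.sum_le_sum fun f hf => ?_
    have := hM f (Finset.ne_of_mem_erase hf)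
    nlinarith [sq_nonneg (ft B f)]
  rw [← h3, ← h2]
  linarith

lemma ft_lower (B : Finset V) (M : ℝ) (hM : ∀ f, f ≠ 0 → M ≤ ft B f) :
    (B.card : ℝ) ^ 3 + M * ((Fintype.card V : ℝ) * B.card - (B.card : ℝ) ^ 2) ≤
    (Fintype.card V : ℝ) * TT B := by
  have h2 := ft_sq B
  have h3 := ft_cube B
  rw [sum_nonzero, ft_zero] at h2 h3
  have : M * ∑ f ∈ univ.erase 0, ft B f ^ 2 ≤ ∑ f ∈ univ.erase 0, ft B f ^ 3 := by
    rw [Finset.mul_sum]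
    refine Finset.sum_le_sum fun f hf => ?_
    have := hM f (Finset.ne_of_mem_erase hf)
    nlinarith [sq_nonneg (ft B f)]
  rw [← h3, ← h2]
  linarith

lemma ft_split (B : Finset V) (f : Dual (ZMod 2) V) :
    ft B f = (B.filter fun x => f x = 0).card - ((B.filter fun x => f x ≠ 0).card : ℝ) := by
  simp only [ft, sg]
  rw [Finset.sum_ite]
  simp
  ring

lemma card_split (B : Finset V) (f : Dual (ZMod 2) V) :
    (B.card : ℝ) = (B.filter fun x => f x = 0).card + ((B.filter fun x => f x ≠ 0).card : ℝ) := by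
  exact_mod_cast (Finset.card_filter_add_card_filter_not (s := B) (fun x => f x = 0)).symm

lemma ft_univ (f : Dual (ZMod 2) V) (hf : f ≠ 0) : ft (univ : Finset V) f = 0 := by
  obtain ⟨g, hg⟩ : ∃ g : V, f g ≠ 0 := by
    by_contra! hc
    exact hf (LinearMap.ext hc)
  have h1 : ∑ x : V, sg (f x) = ∑ x : V, sg (f (x + g)) :=
    (Equiv.sum_comp (Equiv.addRight g) (fun x : V => sg (f x))).symm
  have h2 : ∑ x : V, sg (f (x + g)) = - ∑ x : V, sg (f x) := by
    rw [← Finset.sum_neg_distrib]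
    refine Finset.sum_congr rfl fun x _ => ?_
    rw [map_add, sg_add]
    simp [sg, hg]
  rw [ft]
  linarith

/-- sizes of a hyperplane and its complement -/
lemma card_ker (f : Dual (ZMod 2) V) (hf : f ≠ 0) :
    ((univ.filter fun x : V => f x = 0).card : ℝ) = Fintype.card V / 2 ∧
    ((univ.filter fun x : V => f x ≠ 0).card : ℝ) = Fintype.card V / 2 := by
  have h1 := ft_univ f hf
  rw [ft_split] at h1
  have h2 := card_split (univ : Finset V) f
  rw [Finset.card_univ] at h2
  constructor <;> linarith

/-- A set `A` in `S` (closed under `+u`) containing at most one of `x`, `x+u`. -/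
lemma half_bound (S A : Finset V) (u : V) (hS : ∀ x ∈ S, x + u ∈ S) (hA : A ⊆ S)
    (h : ∀ x ∈ A, x + u ∉ A) : 2 * A.card ≤ S.card := by
  have hinj : (A.image (· + u)).card = A.card :=
    Finset.card_image_of_injective _ (add_left_injective u)
  have hd : Disjoint A (A.image (· + u)) := by
    rw [Finset.disjoint_left]
    intro x hx hx'
    obtain ⟨y, hy, rfl⟩ := Finset.mem_image.1 hx'
    exact h y hy hx
  have : (A ∪ A.image (· + u)).card ≤ S.card := by
    apply Finset.card_le_card
    apply Finset.union_subset hA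
    intro x hx
    obtain ⟨y, hy, rfl⟩ := Finset.mem_image.1 hx
    exact hS y (hA hy)
  rw [Finset.card_union_of_disjoint hd, hinj] at this
  omega

lemma add_add_self (x u : V) : x + u + u = x := by
  rw [add_assoc, add_self_zero, add_zero]

lemma sum_rr (B : Finset V) : ∑ u : V, (rr B u : ℝ) = (B.card : ℝ) ^ 2 := by
  simp only [rr, Finset.card_filter]
  push_cast
  rw [Finset.sum_comm]
  have : ∀ x ∈ B, ∑ u : V, (if x + u ∈ B then (1 : ℝ) else 0) = B.card := by
    intro x _
    have := Equiv.sum_comp (Equiv.addLeft x) (fun y : V => if y ∈ B then (1 : ℝ) else 0)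
    refine Eq.trans ?_ (this.trans ?_)
    · refine Finset.sum_congr rfl fun u _ => ?_
      simp only [Equiv.coe_addLeft]
      congr
    · simp
  rw [Finset.sum_congr rfl this]
  simp [sq]

/-- A dense sum-free set is disjoint from a hyperplane. -/
lemma sumfree_affine (A : Finset V) (hA : ∀ x ∈ A, ∀ y ∈ A, x + y ∉ A)
    (hc : (Fintype.card V : ℝ) < 3 * A.card) :
    ∃ f : Dual (ZMod 2) V, f ≠ 0 ∧ ft A f < 0 ∧ ∀ x ∈ A, f x ≠ 0 := by
  have hN : (0 : ℝ) < Fintype.card V := by exact_mod_cast Fintype.card_pos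
  have hapos : (0 : ℝ) < A.card := by linarith
  obtain ⟨z0, hz0⟩ : A.Nonempty := Finset.card_pos.1 (by exact_mod_cast hapos)
  have hhalf : 2 * (A.card : ℝ) ≤ Fintype.card V := by
    have := half_bound univ A z0 (by simp) (by simp) (fun x hx => hA x hx z0 hz0)
    rw [Finset.card_univ] at this
    exact_mod_cast this
  have hT : TT A = 0 := by
    rw [TT]
    refine Finset.sum_eq_zero fun u hu => ?_
    rw [rr, Finset.filter_false_of_mem (fun x hx => hA x hx u hu)]
    simp
  obtain ⟨f, hf0, hf⟩ : ∃ f : Dual (ZMod 2) V, f ≠ 0 ∧ ft A f < A.card - Fintype.card V / 2 := by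
    by_contra! hcon
    have h := ft_lower A _ hcon
    rw [hT, mul_zero] at h
    set a : ℝ := (A.card : ℝ)
    set N : ℝ := (Fintype.card V : ℝ)
    have : a ^ 3 + (a - N / 2) * (N * a - a ^ 2) = a * N / 2 * (3 * a - N) := by ring
    rw [this] at h
    have : 0 < a * N / 2 * (3 * a - N) := by
      apply mul_pos
      · positivity
      · linarith
    linarith
  refine ⟨f, hf0, by linarith, ?_⟩
  intro z hz hfz
  have h1 := half_bound (univ.filter fun x : V => f x ≠ 0) (A.filter fun x => f x ≠ 0) z
    (by simp [hfz]) (Finset.filter_subset_filter _ (Finset.subset_univ _))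
    (by
      intro x hx hx'
      exact hA x (Finset.mem_filter.1 hx).1 z hz (Finset.mem_filter.1 hx').1)
  have h1' : 2 * ((A.filter fun x => f x ≠ 0).card : ℝ) ≤
    (univ.filter fun x : V => f x ≠ 0).card := by exact_mod_cast h1
  rw [(card_ker f hf0).2] at h1'
  have h2 := ft_split A f
  have h3 := card_split A f
  linarith

/-- `B` meets every `n`-dimensional subspace in a nonzero vector. -/
def Blocks (n : ℕ) (B : Finset V) : Prop :=
  ∀ W : Submodule (ZMod 2) V, finrank (ZMod 2) W = n → ∃ x ∈ W, x ≠ 0 ∧ x ∈ B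

lemma sum_two (z : ZMod 2) : z = 0 ∨ z = 1 := by
  fin_cases z
  · exact Or.inl rfl
  · exact Or.inr rfl

lemma coset_bound (n : ℕ) (B : Finset V) (f : Dual (ZMod 2) V) (hf0 : f ≠ 0)
    (hB : Blocks (n + 3) B) (W' : Submodule (ZMod 2) V) (hW'r : finrank (ZMod 2) W' = n + 2)
    (hW'E : ∀ x ∈ W', x ≠ 0 → x ∉ B) (hW'H : ∀ x ∈ W', f x = 0) :
    (Fintype.card V : ℝ) / 2 ≤ (B.filter fun x => f x ≠ 0).card * 2 ^ (n + 2) := by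
  have hsub : (univ.filter fun x : V => f x ≠ 0) ⊆
      ((B.filter fun x => f x ≠ 0) ×ˢ (univ.filter fun x : V => x ∈ W')).image
        (fun p => p.1 + p.2) := by
    intro x hx
    have hfx : f x ≠ 0 := by simpa using hx
    have hxW : x ∉ W' := fun h => hfx (hW'H x h)
    have hx0 : x ≠ 0 := by rintro rfl; simp at hfx
    have hfr : finrank (ZMod 2) (W' ⊔ Submodule.span (ZMod 2) {x} : Submodule (ZMod 2) V)
        = n + 3 := by
      have h1 := Submodule.finrank_sup_add_finrank_inf_eq W' (Submodule.span (ZMod 2) {x})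
      have h2 : W' ⊓ Submodule.span (ZMod 2) {x} = ⊥ := by
        rw [eq_bot_iff]
        rintro z ⟨hz1, hz2⟩
        obtain ⟨a, rfl⟩ := Submodule.mem_span_singleton.1 hz2
        rcases sum_two a with rfl | rfl
        · simp
        · rw [one_smul] at hz1; exact absurd hz1 hxW
      rw [h2, finrank_bot, hW'r, finrank_span_singleton hx0] at h1
      omega
    obtain ⟨z, hz, hz0, hzB⟩ := hB _ hfr
    obtain ⟨w, hw, v, hv, rfl⟩ := Submodule.mem_sup.1 hz
    obtain ⟨a, rfl⟩ := Submodule.mem_span_singleton.1 hv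
    rcases sum_two a with rfl | rfl
    · rw [zero_smul, add_zero] at hzB hz0
      exact absurd hzB (hW'E w hw hz0)
    · rw [one_smul] at hzB
      refine Finset.mem_image.2 ⟨(w + x, w), ?_, ?_⟩
      · simp [hzB, hw, hW'H w hw, hfx]
      · change w + x + w = x
        rw [add_comm w x, add_add_self]
  have hc1 := (Finset.card_le_card hsub).trans Finset.card_image_le
  rw [Finset.card_product] at hc1
  have hWc : (univ.filter fun x : V => x ∈ W').card = 2 ^ (n + 2) := by
    rw [← Fintype.card_subtype]
    have := Module.card_eq_pow_finrank (K := ZMod 2) (V := W')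
    rw [hW'r, ZMod.card] at this
    rw [← this]
  rw [hWc] at hc1
  have hc2 : ((univ.filter fun x : V => f x ≠ 0).card : ℝ) ≤
    (B.filter fun x => f x ≠ 0).card * 2 ^ (n + 2) := by exact_mod_cast hc1
  rwa [(card_ker f hf0).2] at hc2

lemma base3_aux (B : Finset V) (h0 : (0 : V) ∈ B) (hB : Blocks 3 B)
    (hc : (8 : ℝ) * B.card < 3 * Fintype.card V) (f : Dual (ZMod 2) V) (hf0 : f ≠ 0)
    (hf : (8 : ℝ) * (B.filter fun x => f x ≠ 0).card < Fintype.card V) :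
    (Fintype.card V : ℝ) ≤ 4 * (B.filter fun x => f x = 0).card := by
  by_contra! hlt
  have hk := (card_ker f hf0).1
  have h2 : (B.filter fun x => f x = 0).card + (univ.filter fun x : V => f x = 0 ∧ x ∉ B).card
      = (univ.filter fun x : V => f x = 0).card := by
    rw [← Finset.card_filter_add_card_filter_not (s := univ.filter fun x : V => f x = 0)
      (fun x => x ∈ B), Finset.filter_filter, Finset.filter_filter]
    congr 2
    ext x; simp [and_comm]
  have h2' : ((B.filter fun x => f x = 0).card : ℝ)
    + (univ.filter fun x : V => f x = 0 ∧ x ∉ B).card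
      = (univ.filter fun x : V => f x = 0).card := by exact_mod_cast h2
  have hN : (0 : ℝ) < Fintype.card V := by exact_mod_cast Fintype.card_pos
  have hpos : (0 : ℝ) < (univ.filter fun x : V => f x = 0 ∧ x ∉ B).card := by linarith
  obtain ⟨v, hv⟩ := Finset.card_pos.1 (by exact_mod_cast hpos :
    0 < (univ.filter fun x : V => f x = 0 ∧ x ∉ B).card)
  simp only [Finset.mem_filter, Finset.mem_univ, true_and] at hv
  obtain ⟨x, hx, hxv⟩ : ∃ x, (f x = 0 ∧ x ∉ B) ∧ x + v ∉ B := by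
    by_contra! hcon
    have h1 := half_bound (univ.filter fun x : V => f x = 0)
      (univ.filter fun x : V => f x = 0 ∧ x ∉ B) v
      (by simp [hv.1]) (by intro x; simp +contextual)
      (by
        intro x hx hx'
        simp only [Finset.mem_filter, Finset.mem_univ, true_and] at hx hx'
        exact hx'.2 (hcon x hx))
    have h1' : 2 * ((univ.filter fun x : V => f x = 0 ∧ x ∉ B).card : ℝ)
      ≤ (univ.filter fun x : V => f x = 0).card := by exact_mod_cast h1
    linarith
  have hli : LinearIndependent (ZMod 2) ![x, v] := by
    rw [LinearIndependent.pair_iff]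
    intro a b hab
    rcases sum_two a with rfl | rfl <;> rcases sum_two b with rfl | rfl <;>
      simp only [zero_smul, one_smul, zero_add, add_zero] at hab
    · exact ⟨rfl, rfl⟩
    · rw [hab] at hv; exact absurd h0 hv.2
    · rw [hab] at hx; exact absurd h0 hx.2
    · rw [hab] at hxv; exact absurd h0 hxv
  have hmem : ∀ w ∈ Submodule.span (ZMod 2) (Set.range ![x, v]),
      w = 0 ∨ w = v ∨ w = x ∨ w = x + v := by
    intro w hw
    rw [Submodule.mem_span_range_iff_exists_fun] at hw
    obtain ⟨g, hg⟩ := hw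
    rw [Fin.sum_univ_two] at hg
    change g 0 • x + g 1 • v = w at hg
    rcases sum_two (g 0) with h | h <;> rcases sum_two (g 1) with h' | h' <;>
      simp only [h, h', zero_smul, one_smul, zero_add, add_zero] at hg <;> simp [← hg]
  have hcb := coset_bound 0 B f hf0 hB _ (by simpa using finrank_span_eq_card hli)
    (by
      intro w hw hw0
      rcases hmem w hw with rfl | rfl | rfl | rfl
      · exact absurd rfl hw0
      · exact hv.2
      · exact hx.2
      · exact hxv)
    (by
      intro w hw
      rcases hmem w hw with rfl | rfl | rfl | rfl <;> simp [hv.1, hx.1])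
  norm_num at hcb
  linarith

lemma base3 (B : Finset V) (h0 : (0 : V) ∈ B) (hB : Blocks 3 B)
    (hc : (8 : ℝ) * B.card < 3 * Fintype.card V) :
    ∃ f : Dual (ZMod 2) V, f ≠ 0 ∧
      (Fintype.card V : ℝ) ≤ 4 * (B.filter fun x => f x = 0).card := by
  by_contra! hcon
  have hN : (0 : ℝ) < Fintype.card V := by exact_mod_cast Fintype.card_pos
  have hb0 : (0 : ℝ) < B.card := by exact_mod_cast Finset.card_pos.2 ⟨0, h0⟩
  have hft : ∀ f : Dual (ZMod 2) V, f ≠ 0 → ft B f ≤ B.card - (Fintype.card V : ℝ) / 4 := by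
    intro f hf
    by_contra! hlt
    have h1 := hcon f hf
    have h2 := ft_split B f
    have h4 := fun h => base3_aux B h0 hB hc f hf h
    have h5 : (Fintype.card V : ℝ) ≤ 8 * (B.filter fun x => f x ≠ 0).card := by
      by_contra! h5
      linarith [h4 h5]
    have h3 := card_split B f
    linarith
  have hT := ft_upper B _ hft
  obtain ⟨u, huB, hu⟩ : ∃ u, u ∉ B ∧ (B.card : ℝ) / 4 ≤ rr B u := by
    by_contra! hr
    have hs := sum_rr B
    rw [← Finset.sum_add_sum_compl B] at hs
    have hlt : ∑ u ∈ Bᶜ, (rr B u : ℝ) < ∑ u ∈ Bᶜ, (B.card : ℝ) / 4 := by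
      apply Finset.sum_lt_sum_of_nonempty
      · rw [← Finset.card_pos, Finset.card_compl]
        have : B.card < Fintype.card V := by
          have : (B.card : ℝ) < Fintype.card V := by linarith
          exact_mod_cast this
        omega
      · intro u hu
        exact hr u (Finset.mem_compl.1 hu)
    rw [Finset.sum_const, Finset.card_compl, nsmul_eq_mul,
      Nat.cast_sub (Finset.card_le_univ B)] at hlt
    change TT B + _ = _ at hs
    set b : ℝ := (B.card : ℝ)
    set N : ℝ := (Fintype.card V : ℝ)
    have h5 : N * (b ^ 2 - TT B) < N * ((N - b) * (b / 4)) :=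
      mul_lt_mul_of_pos_left (by linarith) hN
    nlinarith
  set A : Finset V := univ.filter fun x => x ∉ B ∧ x + u ∉ B with hAdef
  have hA : ∀ x, x ∈ A ↔ x ∉ B ∧ x + u ∉ B := by intro x; simp [hAdef]
  have hAcard : (A.card : ℝ) = Fintype.card V - 2 * B.card + rr B u := by
    have e1 : (univ.filter fun x : V => x + u ∈ B).card = B.card := by
      rw [← Finset.card_image_of_injective B (add_left_injective u)]
      congr 1
      ext x
      simp only [Finset.mem_filter, Finset.mem_univ, true_and, Finset.mem_image]
      constructor
      · intro h
        exact ⟨x + u, h, add_add_self x u⟩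
      · rintro ⟨y, hy, rfl⟩
        rwa [add_add_self]
    have e2 := Finset.card_union_add_card_inter B (univ.filter fun x : V => x + u ∈ B)
    have e3 : B ∩ (univ.filter fun x : V => x + u ∈ B) = B.filter fun x => x + u ∈ B := by
      ext x; simp
    have e4 : A = (B ∪ (univ.filter fun x : V => x + u ∈ B))ᶜ := by
      ext x; simp [hAdef]
    have e5 := Finset.card_add_card_compl (B ∪ (univ.filter fun x : V => x + u ∈ B))
    rw [← e4] at e5
    rw [e3, e1] at e2
    have e2' : ((B ∪ (univ.filter fun x : V => x + u ∈ B)).card : ℝ) + rr B u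
      = B.card + B.card := by exact_mod_cast e2
    have e5' : ((B ∪ (univ.filter fun x : V => x + u ∈ B)).card : ℝ) + A.card
      = Fintype.card V := by exact_mod_cast e5
    linarith
  have hsf : ∀ x ∈ A, ∀ y ∈ A, x + y ∉ A := by
    intro x hx y hy hxy
    rw [hA] at hx hy hxy
    have hli : LinearIndependent (ZMod 2) ![u, x, y] := by
      rw [Fintype.linearIndependent_iff]
      intro g hg
      rw [Fin.sum_univ_three] at hg
      change g 0 • u + g 1 • x + g 2 • y = 0 at hg
      rcases sum_two (g 0) with h | h <;> rcases sum_two (g 1) with h' | h' <;>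
        rcases sum_two (g 2) with h'' | h'' <;>
        simp only [h, h', h'', zero_smul, one_smul, zero_add, add_zero] at hg
      · intro i; fin_cases i <;> assumption
      all_goals exfalso
      · rw [hg] at hy; exact hy.1 h0
      · rw [hg] at hx; exact hx.1 h0
      · rw [hg] at hxy; exact hxy.1 h0
      · rw [hg] at huB; exact huB h0
      · rw [add_comm u, ] at hg; rw [hg] at hy; exact hy.2 h0
      · rw [add_comm u, ] at hg; rw [hg] at hx; exact hx.2 h0
      · rw [add_assoc, add_comm u] at hg; rw [hg] at hxy; exact hxy.2 h0
    have hfr := finrank_span_eq_card hli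
    obtain ⟨w, hw, hw0, hwB⟩ := hB _ (by simpa using hfr)
    rw [Submodule.mem_span_range_iff_exists_fun] at hw
    obtain ⟨g, hg⟩ := hw
    rw [Fin.sum_univ_three] at hg
    change g 0 • u + g 1 • x + g 2 • y = w at hg
    rcases sum_two (g 0) with h | h <;> rcases sum_two (g 1) with h' | h' <;>
      rcases sum_two (g 2) with h'' | h'' <;>
      simp only [h, h', h'', zero_smul, one_smul, zero_add, add_zero] at hg <;>
      rw [← hg] at hwB hw0
    · exact hw0 rfl
    · exact hy.1 hwB
    · exact hx.1 hwB
    · exact hxy.1 hwB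
    · exact huB hwB
    · rw [add_comm] at hwB; exact hy.2 hwB
    · rw [add_comm] at hwB; exact hx.2 hwB
    · rw [add_assoc, add_comm] at hwB; exact hxy.2 hwB
  obtain ⟨f, hf0, hfneg, hfA⟩ := sumfree_affine A hsf (by linarith)
  have hAu : ∀ x ∈ A, x + u ∈ A := by
    intro x hx
    rw [hA] at hx ⊢
    rw [add_add_self]
    exact ⟨hx.2, hx.1⟩
  have hfu : f u = 0 := by
    by_contra hne
    have : ft A f = - ft A f := by
      conv_lhs => rw [ft]
      rw [ft, ← Finset.sum_neg_distrib]
      refine Finset.sum_bij' (fun x _ => x + u) (fun x _ => x + u) hAu hAu ?_ ?_ ?_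
      · intro x _; exact add_add_self x u
      · intro x _; exact add_add_self x u
      · intro x _
        rw [map_add, sg_add]
        simp [sg, hne]
    linarith
  have h1 := half_bound (univ.filter fun x : V => f x = 0)
    (univ.filter fun x : V => f x = 0 ∧ x ∉ B) u
    (by simp [hfu]) (by intro x; simp +contextual)
    (by
      intro x hx hx'
      simp only [Finset.mem_filter, Finset.mem_univ, true_and] at hx hx'
      exact hfA x ((hA x).2 ⟨hx.2, hx'.2⟩) hx.1)
  have h2 : (B.filter fun x => f x = 0).card + (univ.filter fun x : V => f x = 0 ∧ x ∉ B).card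
      = (univ.filter fun x : V => f x = 0).card := by
    rw [← Finset.card_filter_add_card_filter_not (s := univ.filter fun x : V => f x = 0)
      (fun x => x ∈ B), Finset.filter_filter, Finset.filter_filter]
    congr 2
    ext x; simp [and_comm]
  have h3 := (card_ker f hf0).1
  have h4 := hcon f hf0
  have h1' : 2 * ((univ.filter fun x : V => f x = 0 ∧ x ∉ B).card : ℝ)
    ≤ (univ.filter fun x : V => f x = 0).card := by exact_mod_cast h1
  have h2' : ((B.filter fun x => f x = 0).card : ℝ)
    + (univ.filter fun x : V => f x = 0 ∧ x ∉ B).card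
      = (univ.filter fun x : V => f x = 0).card := by exact_mod_cast h2
  linarith

end fourier

section induct
open scoped Classical

lemma hyper (n : ℕ) : ∀ (V : Type) [AddCommGroup V] [Module (ZMod 2) V] [Fintype V]
    (B : Finset V), (0 : V) ∈ B → Blocks (n + 3) B →
    (2 : ℝ) ^ (n + 3) * B.card < 3 * Fintype.card V →
    ∃ f : Dual (ZMod 2) V, f ≠ 0 ∧
      (Fintype.card V : ℝ) ≤ 2 ^ (n + 2) * (B.filter fun x => f x = 0).card := by
  induction n with
  | zero =>
    intro V _ _ _ B h0 hB hc
    have := base3 B h0 hB (by norm_num at hc ⊢; linarith)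
    norm_num
    exact this
  | succ n ih =>
    intro V _ _ _ B h0 hB hc
    have hN : (0 : ℝ) < Fintype.card V := by exact_mod_cast Fintype.card_pos
    obtain ⟨u, hu⟩ : ∃ u, u ∉ B := by
      by_contra! hall
      have : B = univ := by ext x; simp [hall x]
      rw [this, Finset.card_univ] at hc
      have h2 : (1 : ℝ) ≤ 2 ^ n := one_le_pow₀ (by norm_num)
      have h3 : (2 : ℝ) ^ (n + 1 + 3) = 16 * 2 ^ n := by ring
      rw [h3] at hc
      nlinarith
    have hu0 : u ≠ 0 := by rintro rfl; exact hu h0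
    set U : Submodule (ZMod 2) V := Submodule.span (ZMod 2) {u} with hU
    have hmemU : ∀ x, x ∈ U → x = 0 ∨ x = u := by
      intro x hx
      obtain ⟨a, rfl⟩ := Submodule.mem_span_singleton.1 hx
      rcases sum_two a with rfl | rfl <;> simp
    have hUf : finrank (ZMod 2) U = 1 := finrank_span_singleton hu0
    let π := U.mkQ
    haveI : Fintype (V ⧸ U) := Fintype.ofFinite _
    have hcardq : (Fintype.card V : ℝ) = 2 * Fintype.card (V ⧸ U) := by
      have h1 := Module.card_eq_pow_finrank (K := ZMod 2) (V := V)
      have h2 := Module.card_eq_pow_finrank (K := ZMod 2) (V := V ⧸ U)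
      have h3 := Submodule.finrank_quotient_add_finrank U
      rw [hUf] at h3
      rw [← h3, pow_succ, ← h2] at h1
      rw [h1]; simp [ZMod.card]; ring
    obtain ⟨f, hf0, hf⟩ := ih (V ⧸ U) (B.image π) (Finset.mem_image.2 ⟨0, h0, map_zero _⟩)
      (by
        intro W hW
        have hfr : finrank (ZMod 2) (W.comap π) = n + 1 + 3 := by
          have h1 := LinearMap.finrank_range_add_finrank_ker (π.domRestrict (W.comap π))
          have h2 : LinearMap.range (π.domRestrict (W.comap π)) = W := by
            rw [LinearMap.range_domRestrict]
            exact Submodule.map_comap_eq_of_surjective (Submodule.mkQ_surjective U) W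
          have h3 : finrank (ZMod 2) (LinearMap.ker (π.domRestrict (W.comap π))) = 1 := by
            have hle : U ≤ W.comap π := by
              intro x hx
              rw [Submodule.mem_comap]
              have : π x = 0 := by simpa [π] using hx
              rw [this]; exact W.zero_mem
            have : LinearMap.ker (π.domRestrict (W.comap π)) = U.comap (W.comap π).subtype := by
              ext x; simp [π, LinearMap.domRestrict_apply]
            rw [this, (Submodule.comapSubtypeEquivOfLe hle).finrank_eq, hUf]
          rw [h2, h3, hW] at h1
          omega
        obtain ⟨x, hxW, hx0, hxB⟩ := hB _ hfr
        refine ⟨π x, hxW, ?_, Finset.mem_image_of_mem _ hxB⟩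
        intro hpx
        have : x ∈ U := by simpa [π] using hpx
        rcases hmemU x this with h | h
        · exact hx0 h
        · exact hu (h ▸ hxB))
      (by
        have : ((B.image π).card : ℝ) ≤ B.card := by exact_mod_cast Finset.card_image_le
        have h2 : (0 : ℝ) < 2 ^ (n + 3) := by positivity
        have h3 : (2 : ℝ) ^ (n + 1 + 3) = 2 * 2 ^ (n + 3) := by ring
        rw [h3, hcardq] at hc
        nlinarith)
    refine ⟨f.comp π, ?_, ?_⟩
    · intro h
      apply hf0
      ext x
      exact LinearMap.congr_fun h x
    · have hle : ((B.image π).filter fun x => f x = 0).card ≤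
          (B.filter fun x => (f.comp π) x = 0).card := by
        refine le_trans (Finset.card_le_card ?_) (Finset.card_image_le (f := π))
        intro y hy
        obtain ⟨hy1, hy2⟩ := Finset.mem_filter.1 hy
        obtain ⟨x, hx, rfl⟩ := Finset.mem_image.1 hy1
        exact Finset.mem_image.2 ⟨x, Finset.mem_filter.2 ⟨hx, hy2⟩, rfl⟩
      have hle' : (((B.image π).filter fun x => f x = 0).card : ℝ) ≤
          (B.filter fun x => (f.comp π) x = 0).card := by exact_mod_cast hle
      have h2 : (0 : ℝ) < 2 ^ (n + 2) := by positivity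
      have h3 : (2 : ℝ) ^ (n + 1 + 2) = 2 * 2 ^ (n + 2) := by ring
      rw [h3, hcardq]
      nlinarith

lemma finrank_ker_add {V : Type} [AddCommGroup V] [Module (ZMod 2) V] [Fintype V]
    (f : Dual (ZMod 2) V) (hf : f ≠ 0) :
    finrank (ZMod 2) (LinearMap.ker f) + 1 = finrank (ZMod 2) V :=
  Module.Dual.finrank_ker_add_one_of_ne_zero hf

lemma main (n : ℕ) : ∀ (V : Type) [AddCommGroup V] [Module (ZMod 2) V] [Fintype V]
    (B : Finset V), (0 : V) ∈ B → Blocks (n + 2) B →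
    (2 : ℝ) ^ (n + 2) * B.card < 3 * Fintype.card V →
    ∃ K : Submodule (ZMod 2) V, finrank (ZMod 2) K + n = finrank (ZMod 2) V ∧
      ∀ W : Submodule (ZMod 2) V, W ≤ K → finrank (ZMod 2) W = 2 → ∃ x ∈ W, x ≠ 0 ∧ x ∈ B := by
  induction n with
  | zero =>
    intro V _ _ _ B h0 hB hc
    exact ⟨⊤, by simp, fun W _ hW => hB W hW⟩
  | succ n ih =>
    intro V _ _ _ B h0 hB hc
    obtain ⟨f, hf0, hf⟩ := hyper n V B h0 hB hc
    set H := LinearMap.ker f with hH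
    have hHr := finrank_ker_add f hf0
    have hHcard : (Fintype.card H : ℝ) = Fintype.card V / 2 := by
      rw [← (card_ker f hf0).1, ← Fintype.card_subtype]
      exact congrArg _ (Fintype.card_congr (Equiv.refl _))
    obtain ⟨K, hK, hKW⟩ := ih H (univ.filter fun x : H => (x : V) ∈ B) (by simpa using h0)
      (by
        intro W hW
        by_contra! hcon
        set W' := W.map H.subtype with hW'
        have hW'r : finrank (ZMod 2) W' = n + 2 := by
          rw [hW', Submodule.finrank_map_subtype_eq H W, hW]
        have hW'E : ∀ x ∈ W', x ≠ 0 → x ∉ B := by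
          rintro x ⟨y, hy, rfl⟩ hx0 hxB
          exact hcon y hy (by rintro rfl; exact hx0 (map_zero _)) (by simpa using hxB)
        have hW'H : ∀ x ∈ W', f x = 0 := by
          rintro x ⟨y, hy, rfl⟩
          exact y.2
        have hc2 := coset_bound n B f hf0 hB W' hW'r hW'E hW'H
        have h3 := card_split B f
        have h4 : (2 : ℝ) ^ (n + 1 + 2) = 2 * 2 ^ (n + 2) := by ring
        rw [h4, h3] at hc
        nlinarith)
      (by
        have hle : ((univ.filter fun x : H => (x : V) ∈ B).card : ℝ) ≤ B.card := by
          have : (univ.filter fun x : H => (x : V) ∈ B).card ≤ B.card := by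
            apply Finset.card_le_card_of_injOn (fun x : H => (x : V))
            · intro x hx
              simpa using hx
            · exact Subtype.val_injective.injOn
          exact_mod_cast this
        have h4 : (2 : ℝ) ^ (n + 1 + 2) = 2 * 2 ^ (n + 2) := by ring
        have h5 : (0 : ℝ) < 2 ^ (n + 2) := by positivity
        rw [h4] at hc
        rw [hHcard]
        nlinarith)
    refine ⟨K.map H.subtype, ?_, ?_⟩
    · rw [Submodule.finrank_map_subtype_eq H K]
      rw [← hH] at hHr
      omega
    · intro W hWK hW
      have hWH : W ≤ H := hWK.trans (Submodule.map_subtype_le H K)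
      obtain ⟨x, hx, hx0, hxB⟩ := hKW (W.comap H.subtype)
        (by
          intro y hy
          obtain ⟨z, hz, hzy⟩ := hWK hy
          have : z = y := Subtype.ext hzy
          exact this ▸ hz)
        (by rw [(Submodule.comapSubtypeEquivOfLe hWH).finrank_eq, hW])
      exact ⟨x, hx, by simpa using hx0, by simpa using hxB⟩

end induct
end PGFree

theorem stmt_15 (r n : ℕ) (hn : 2 ≤ n) (hr : n ≤ r)
    (E : Set (Fin r → ZMod 2)) (h0 : (0 : Fin r → ZMod 2) ∉ E)
    (hfree : ¬ ∃ W : Submodule (ZMod 2) (Fin r → ZMod 2),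
      Module.finrank (ZMod 2) W = n ∧ ∀ x ∈ W, x ≠ 0 → x ∈ E)
    (hcard : (1 - 3 / 2^n : ℝ) * 2^r < (E.ncard : ℝ)) :
    ∃ K : Submodule (ZMod 2) (Fin r → ZMod 2),
      Module.finrank (ZMod 2) K = r - n + 2 ∧
      (¬ ∃ x y, x ∈ E ∩ (K : Set (Fin r → ZMod 2)) ∧
        y ∈ E ∩ (K : Set (Fin r → ZMod 2)) ∧ x ≠ y ∧
        x + y ∈ E ∩ (K : Set (Fin r → ZMod 2))) ∧
      (1/4 : ℝ) * 2^(r - n + 2) < ((E ∩ (K : Set (Fin r → ZMod 2))).ncard : ℝ) := by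
  classical
  obtain ⟨m, rfl⟩ : ∃ m, n = m + 2 := ⟨n - 2, by omega⟩
  obtain ⟨k, rfl⟩ : ∃ k, r = k + (m + 2) := ⟨r - (m + 2), by omega⟩
  have hVc : (Fintype.card (Fin (k + (m + 2)) → ZMod 2) : ℝ) = 2 ^ (k + (m + 2)) := by
    simp [ZMod.card]
  have hVc' : (Nat.card (Fin (k + (m + 2)) → ZMod 2) : ℝ) = 2 ^ (k + (m + 2)) := by
    rw [Nat.card_eq_fintype_card, hVc]
  set B : Finset (Fin (k + (m + 2)) → ZMod 2) := Finset.univ.filter fun x => x ∉ E with hB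
  have hBE : (B.card : ℝ) + E.ncard = 2 ^ (k + (m + 2)) := by
    have h1 := Set.ncard_add_ncard_compl E
    have h2 : (Eᶜ).ncard = B.card := by
      rw [← Set.ncard_coe_finset B]
      congr 1
      ext x; simp [hB]
    rw [h2] at h1
    rw [← hVc', ← h1]
    push_cast; ring
  have hp : (0 : ℝ) < 2 ^ (m + 2) := by positivity
  have hBlt : (B.card : ℝ) < 3 * 2 ^ k := by
    have : (1 - 3 / 2^(m+2) : ℝ) * 2^(k + (m + 2)) = 2 ^ (k + (m + 2)) - 3 * 2 ^ k := by
      rw [pow_add 2 k]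
      generalize (2 : ℝ) ^ (m + 2) = p at hp
      field_simp
    linarith
  obtain ⟨K, hK, hKW⟩ := PGFree.main m (Fin (k + (m + 2)) → ZMod 2) B (by simp [hB, h0])
    (by
      intro W hW
      by_contra! hcon
      refine hfree ⟨W, hW, fun x hx hx0 => ?_⟩
      have := hcon x hx hx0
      simpa [hB] using this)
    (by
      rw [hVc, pow_add 2 k]
      nlinarith)
  have hKr : Module.finrank (ZMod 2) K = k + 2 := by
    have : Module.finrank (ZMod 2) (Fin (k + (m + 2)) → ZMod 2) = k + (m + 2) := by simp
    omega
  have e1 : k + (m + 2) - (m + 2) + 2 = k + 2 := by omega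
  refine ⟨K, by rw [e1, hKr], ?_, ?_⟩
  · rintro ⟨x, y, hx, hy, hxy, hs⟩
    have hx0 : x ≠ 0 := by rintro rfl; exact h0 hx.1
    have hs0 : x + y ≠ 0 := by intro h; rw [h] at hs; exact h0 hs.1
    have hy0 : y ≠ 0 := by rintro rfl; exact h0 hy.1
    have hli : LinearIndependent (ZMod 2) ![x, y] := by
      rw [LinearIndependent.pair_iff]
      intro a b hab
      rcases PGFree.sum_two a with rfl | rfl <;> rcases PGFree.sum_two b with rfl | rfl <;>
        simp_all
    have hfr := finrank_span_eq_card hli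
    obtain ⟨w, hw, hw0, hwB⟩ := hKW (Submodule.span (ZMod 2) (Set.range ![x, y])) (by
      rw [Submodule.span_le]
      rintro z ⟨i, rfl⟩
      fin_cases i
      · exact hx.2
      · exact hy.2) (by simpa using hfr)
    rw [Submodule.mem_span_range_iff_exists_fun] at hw
    obtain ⟨g, hg⟩ := hw
    have hwE : w ∉ E := by simpa [hB] using hwB
    simp only [Fin.sum_univ_two, Matrix.cons_val_zero, Matrix.cons_val_one] at hg
    rcases PGFree.sum_two (g 0) with h | h <;> rcases PGFree.sum_two (g 1) with h' | h' <;>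
      simp only [h, h', zero_smul, one_smul, zero_add, add_zero] at hg <;>
      rw [← hg] at hwE hw0
    · exact hw0 rfl
    · exact hwE hy.1
    · exact hwE hx.1
    · exact hwE hs.1
  · rw [e1]
    have hKc : ((K : Set (Fin (k + (m + 2)) → ZMod 2)).ncard : ℝ) = 2 ^ (k + 2) := by
      have h1 : (K : Set (Fin (k + (m + 2)) → ZMod 2)).ncard = Nat.card K := rfl
      have h2 := Module.card_eq_pow_finrank (K := ZMod 2) (V := K)
      rw [h1, Nat.card_eq_fintype_card, h2, hKr, ZMod.card]
      push_cast; rfl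
    have hle : (K : Set (Fin (k + (m + 2)) → ZMod 2)).ncard ≤ (E ∩ (K : Set (Fin (k + (m + 2)) → ZMod 2))).ncard + B.card := by
      rw [← Set.ncard_coe_finset B]
      refine le_trans (Set.ncard_le_ncard ?_ (Set.toFinite _)) (Set.ncard_union_le _ _)
      intro x hx
      by_cases hxE : x ∈ E
      · exact Or.inl ⟨hxE, hx⟩
      · exact Or.inr (by simp [hB, hxE])
    have hle' : ((K : Set (Fin (k + (m + 2)) → ZMod 2)).ncard : ℝ) ≤ (E ∩ (K : Set (Fin (k + (m + 2)) → ZMod 2))).ncard + B.card := by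
      exact_mod_cast hle
    rw [hKc] at hle'
    have h5 : (2 : ℝ) ^ (k + 2) = 4 * 2 ^ k := by ring
    rw [h5] at hle' ⊢
    linarith
end
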